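/- arXiv:1904.00127 — 2 statements merged into one kernel-verified Lean document; each statement's English description precedes it below -/
import Mathlib

section
/- Let α > 0 and Y₀(y) = (1 − |y|^α)/(1 + |y|^α). Then the function y ↦ (2α²|y|^{α−2}/(1 + |y|^α)²) · Y₀(y) · log(1 + |y|^α) is integrable on ℝ² and ∫_{ℝ²} (2α²|y|^{α−2}/(1 + |y|^α)²) · Y₀(y) · log(1 + |y|^α) dy = −2πα. -/
open MeasureTheory Real

noncomputable section

/-- The plane `ℝ²`. -/
abbrev Plane := EuclideanSpace ℝ (Fin 2)

/-- The Laplacian of `f : ℝ² → ℝ`: the sum of the two second partial derivatives. -/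
noncomputable def lap (f : Plane → ℝ) (x : Plane) : ℝ :=
  ∑ i : Fin 2,
    fderiv ℝ (fun y => fderiv ℝ f y (EuclideanSpace.single i 1)) x (EuclideanSpace.single i 1)

/-- The standard singular bubble `U(x) = log(2α²δ^α / (δ^α + |x-ξ|^α)²)`. -/
noncomputable def bubble (α δ : ℝ) (ξ : Plane) (x : Plane) : ℝ :=
  Real.log (2 * α ^ 2 * δ ^ α / (δ ^ α + ‖x - ξ‖ ^ α) ^ 2)

/-- `Y₀(y) = (1 - |y|^α)/(1 + |y|^α)`. -/
noncomputable def Ynull (α : ℝ) (y : Plane) : ℝ :=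
  (1 - ‖y‖ ^ α) / (1 + ‖y‖ ^ α)

open Filter Topology Set in
/-- `∫₀^∞ log (1 + s) / (1 + s) ^ (k + 2) ds = 1 / (k + 1)²`, together with integrability. -/
lemma integral_log_one_add_div_pow (k : ℕ) :
    IntegrableOn (fun s : ℝ => Real.log (1 + s) / (1 + s) ^ (k + 2)) (Ioi 0) ∧
      ∫ s in Ioi (0 : ℝ), Real.log (1 + s) / (1 + s) ^ (k + 2) = 1 / ((k : ℝ) + 1) ^ 2 := by
  set F : ℝ → ℝ := fun s =>
    -(((k : ℝ) + 1) * Real.log (1 + s) + 1) / (((k : ℝ) + 1) ^ 2 * (1 + s) ^ (k + 1)) with hF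
  have hk : (0 : ℝ) < k + 1 := by positivity
  have hderiv : ∀ s ∈ Ici (0 : ℝ),
      HasDerivAt F (Real.log (1 + s) / (1 + s) ^ (k + 2)) s := by
    intro s hs
    have hs' : (0 : ℝ) < 1 + s := by linarith [mem_Ici.1 hs]
    have hu : HasDerivAt (fun s : ℝ => 1 + s) 1 s := (hasDerivAt_id s).const_add 1
    have hnum := (((hu.log hs'.ne').const_mul ((k : ℝ) + 1)).add_const 1).neg
    have hden := (hu.pow (k + 1)).const_mul (((k : ℝ) + 1) ^ 2)
    refine (hnum.div hden (by simp only [Pi.pow_apply]; positivity)).congr_deriv ?_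
    simp only [Pi.pow_apply, Pi.neg_apply, Nat.cast_add, Nat.cast_one, add_tsub_cancel_right]
    field_simp
    ring
  have hlim : Tendsto F atTop (𝓝 0) := by
    have hu : Tendsto (fun s : ℝ => 1 + s) atTop atTop := tendsto_atTop_add_const_left _ _ tendsto_id
    have hlog : Tendsto (fun u : ℝ => Real.log u / u ^ (k + 1)) atTop (𝓝 0) := by
      have := (isLittleO_log_rpow_atTop hk).tendsto_div_nhds_zero
      exact_mod_cast this
    have hinv : Tendsto (fun u : ℝ => (u ^ (k + 1))⁻¹) atTop (𝓝 0) :=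
      (tendsto_pow_atTop k.succ_ne_zero).inv_tendsto_atTop
    have h := ((hlog.const_mul (-1 / ((k : ℝ) + 1))).sub
      (hinv.const_mul (1 / ((k : ℝ) + 1) ^ 2))).comp hu
    simp only [mul_zero, sub_zero] at h
    refine h.congr' ?_
    filter_upwards [eventually_gt_atTop 0] with s hs
    simp only [hF, Function.comp_apply]
    field_simp
    ring
  have hint : IntegrableOn (fun s : ℝ => Real.log (1 + s) / (1 + s) ^ (k + 2)) (Ioi 0) :=
    integrableOn_Ioi_deriv_of_nonneg' hderiv (fun s hs => by
      have hs' : (0 : ℝ) < s := hs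
      have := Real.log_nonneg (by linarith : (1 : ℝ) ≤ 1 + s)
      positivity) hlim
  refine ⟨hint, ?_⟩
  rw [integral_Ioi_of_hasDerivAt_of_tendsto' hderiv hint hlim]
  simp [hF]
  field_simp

open Set in
/-- `∫₀^∞ (1 - s) / (1 + s)³ * log (1 + s) ds = -1/2`, together with integrability. -/
lemma integral_one_sub_div_pow_mul_log :
    IntegrableOn (fun s : ℝ => (1 - s) / (1 + s) ^ 3 * Real.log (1 + s)) (Ioi 0) ∧
      ∫ s in Ioi (0 : ℝ), (1 - s) / (1 + s) ^ 3 * Real.log (1 + s) = -(1 / 2) := by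
  obtain ⟨h0, e0⟩ := integral_log_one_add_div_pow 0
  obtain ⟨h1, e1⟩ := integral_log_one_add_div_pow 1
  have heq : EqOn (fun s : ℝ => 2 * (Real.log (1 + s) / (1 + s) ^ (1 + 2)) -
      Real.log (1 + s) / (1 + s) ^ (0 + 2))
      (fun s : ℝ => (1 - s) / (1 + s) ^ 3 * Real.log (1 + s)) (Ioi 0) := by
    intro s hs
    have hs' : (0 : ℝ) < 1 + s := by linarith [mem_Ioi.1 hs]
    simp only
    field_simp
    ring
  refine ⟨IntegrableOn.congr_fun ((h1.const_mul 2).sub h0) heq measurableSet_Ioi, ?_⟩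
  rw [← setIntegral_congr_fun measurableSet_Ioi heq, integral_sub (h1.const_mul 2) h0,
    integral_const_mul, e0, e1]
  norm_num

theorem integral_kernel_Ynull_log_one_add (α : ℝ) (hα : 0 < α) :
    Integrable (fun y : Plane =>
        (2 * α ^ 2 * ‖y‖ ^ (α - 2) / (1 + ‖y‖ ^ α) ^ 2) * Ynull α y *
          Real.log (1 + ‖y‖ ^ α)) volume ∧
      ∫ y : Plane,
          (2 * α ^ 2 * ‖y‖ ^ (α - 2) / (1 + ‖y‖ ^ α) ^ 2) * Ynull α y *
            Real.log (1 + ‖y‖ ^ α) =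
        -(2 * π * α) := by
  set f : ℝ → ℝ := fun r => (2 * α ^ 2 * r ^ (α - 2) / (1 + r ^ α) ^ 2) *
    ((1 - r ^ α) / (1 + r ^ α)) * Real.log (1 + r ^ α)
  set g : ℝ → ℝ := fun s => (1 - s) / (1 + s) ^ 3 * Real.log (1 + s)
  obtain ⟨hg, eg⟩ := integral_one_sub_div_pow_mul_log
  have hdim : Module.finrank ℝ Plane - 1 = 1 := by simp
  have heq : Set.EqOn (fun r : ℝ => (2 * α) * ((α * r ^ (α - 1)) • g (r ^ α)))
      (fun r : ℝ => r ^ (Module.finrank ℝ Plane - 1) • f r) (Set.Ioi 0) := by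
    intro r hr
    have hr' : (0 : ℝ) < r := hr
    have hpow : r ^ (α - 1) = r * r ^ (α - 2) := by
      rw [show α - 1 = 1 + (α - 2) by ring, Real.rpow_add hr', Real.rpow_one]
    have : 0 < r ^ α := Real.rpow_pos_of_pos hr' α
    simp only [hdim, hpow, f, g, smul_eq_mul, pow_one]
    field_simp
  have hcomp : IntegrableOn (fun r : ℝ => (α * r ^ (α - 1)) • g (r ^ α)) (Set.Ioi 0) := by
    simpa only [abs_of_pos hα] using (integrableOn_Ioi_comp_rpow_iff g hα.ne').2 hg
  refine ⟨(integrable_fun_norm_addHaar (f := f) (volume : Measure Plane)).2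
    (IntegrableOn.congr_fun (hcomp.const_mul (2 * α)) heq measurableSet_Ioi), ?_⟩
  refine (integral_fun_norm_addHaar (volume : Measure Plane) f).trans ?_
  rw [← setIntegral_congr_fun measurableSet_Ioi heq, integral_const_mul,
    integral_comp_rpow_Ioi_of_pos hα, eg, measureReal_def, EuclideanSpace.volume_ball_fin_two]
  simp [Real.pi_pos.le]
  ring
end
end

section
/- Let α > 0 and Y₀(y) = (1 − |y|^α)/(1 + |y|^α). Then Y₀ is differentiable on ℝ² \ {0}, the function y ↦ |∇Y₀(y)|² is integrable on ℝ², and ∫_{ℝ²} |∇Y₀(y)|² dy = 4πα/3. -/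
open MeasureTheory Real

noncomputable section

/-- The derivative of the radial profile `r ↦ (1 - r ^ α) / (1 + r ^ α)`. -/
lemma hasDerivAt_profile (α : ℝ) {r : ℝ} (hr : 0 < r) :
    HasDerivAt (fun r : ℝ => (1 - r ^ α) / (1 + r ^ α))
      (-(2 * (α * r ^ (α - 1))) / (1 + r ^ α) ^ 2) r := by
  have hp : HasDerivAt (fun r : ℝ => r ^ α) (α * r ^ (α - 1)) r :=
    Real.hasDerivAt_rpow_const (Or.inl hr.ne')
  have ht : 1 + r ^ α ≠ 0 := by positivity
  refine ((hp.const_sub 1).div (hp.const_add 1) ht).congr_deriv ?_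
  ring

/-- The chain rule for `Ynull α = profile ∘ ‖·‖` away from the origin. -/
lemma hasFDerivAt_Ynull (α : ℝ) {y : Plane} (hy : y ≠ 0) :
    HasFDerivAt (Ynull α)
      ((-(2 * (α * ‖y‖ ^ (α - 1))) / (1 + ‖y‖ ^ α) ^ 2) •
        fderiv ℝ (fun z : Plane => ‖z‖) y) y :=
  (hasDerivAt_profile α (norm_pos_iff.mpr hy)).comp_hasFDerivAt y
    ((contDiffAt_norm ℝ hy).differentiableAt one_ne_zero).hasFDerivAt

lemma norm_gradient_Ynull_sq (α : ℝ) {y : Plane} (hy : y ≠ 0) :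
    ‖gradient (Ynull α) y‖ ^ 2 = (2 * (α * ‖y‖ ^ (α - 1)) / (1 + ‖y‖ ^ α) ^ 2) ^ 2 := by
  have hnorm := norm_fderiv_norm ((contDiffAt_norm ℝ hy).differentiableAt one_ne_zero)
  rw [gradient, LinearIsometryEquiv.norm_map, (hasFDerivAt_Ynull α hy).fderiv, norm_smul, hnorm,
    mul_one, Real.norm_eq_abs, sq_abs, neg_div, neg_sq]

/-- A primitive, in polar coordinates, of the radial energy density. -/
lemma hasDerivAt_energy_primitive (α : ℝ) {r : ℝ} (hr : 0 < r) :
    HasDerivAt (fun r : ℝ => 4 * α * (((1 + r ^ α) ^ 3)⁻¹ / 3 - ((1 + r ^ α) ^ 2)⁻¹ / 2))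
      (r * (2 * (α * r ^ (α - 1)) / (1 + r ^ α) ^ 2) ^ 2) r := by
  have hp : HasDerivAt (fun r : ℝ => 1 + r ^ α) (α * r ^ (α - 1)) r :=
    (Real.hasDerivAt_rpow_const (Or.inl hr.ne')).const_add 1
  have ht : 1 + r ^ α ≠ 0 := by positivity
  refine (((((hp.pow 3).inv (pow_ne_zero 3 ht)).div_const 3).sub
    (((hp.pow 2).inv (pow_ne_zero 2 ht)).div_const 2)).const_mul (4 * α)).congr_deriv ?_
  simp only [Pi.pow_apply, Real.rpow_sub_one hr.ne']
  field_simp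
  ring

/-- The radial energy density is integrable, with total integral `2 * α / 3`. -/
lemma integral_energy_radial {α : ℝ} (hα : 0 < α) :
    IntegrableOn (fun r : ℝ => r * (2 * (α * r ^ (α - 1)) / (1 + r ^ α) ^ 2) ^ 2) (Set.Ioi 0) ∧
      ∫ r in Set.Ioi (0 : ℝ), r * (2 * (α * r ^ (α - 1)) / (1 + r ^ α) ^ 2) ^ 2 = 2 * α / 3 := by
  have hcont : ContinuousWithinAt
      (fun r : ℝ => 4 * α * (((1 + r ^ α) ^ 3)⁻¹ / 3 - ((1 + r ^ α) ^ 2)⁻¹ / 2))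
      (Set.Ici 0) 0 := by
    have hc : ContinuousAt (fun r : ℝ => 1 + r ^ α) 0 :=
      continuousAt_const.add (Real.continuousAt_rpow_const 0 α (Or.inr hα.le))
    have ht : 1 + (0 : ℝ) ^ α ≠ 0 := by positivity
    exact (continuousAt_const.mul ((((hc.pow 3).inv₀ (pow_ne_zero 3 ht)).div_const 3).sub
      (((hc.pow 2).inv₀ (pow_ne_zero 2 ht)).div_const 2))).continuousWithinAt
  have hnonneg : ∀ r ∈ Set.Ioi (0 : ℝ),
      0 ≤ r * (2 * (α * r ^ (α - 1)) / (1 + r ^ α) ^ 2) ^ 2 :=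
    fun r hr => mul_nonneg (le_of_lt hr) (sq_nonneg _)
  have hlim : Filter.Tendsto
      (fun r : ℝ => 4 * α * (((1 + r ^ α) ^ 3)⁻¹ / 3 - ((1 + r ^ α) ^ 2)⁻¹ / 2))
      Filter.atTop (nhds 0) := by
    have ht : Filter.Tendsto (fun r : ℝ => 1 + r ^ α) Filter.atTop Filter.atTop :=
      Filter.tendsto_atTop_add_const_left _ 1 (tendsto_rpow_atTop hα)
    have hinv {n : ℕ} (hn : n ≠ 0) :
        Filter.Tendsto (fun r : ℝ => ((1 + r ^ α) ^ n)⁻¹) Filter.atTop (nhds 0) :=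
      ((Filter.tendsto_pow_atTop hn).comp ht).inv_tendsto_atTop
    simpa using (((hinv three_ne_zero).div_const 3).sub
      ((hinv two_ne_zero).div_const 2)).const_mul (4 * α)
  have hderiv := fun r (hr : r ∈ Set.Ioi (0 : ℝ)) => hasDerivAt_energy_primitive α hr
  refine ⟨integrableOn_Ioi_deriv_of_nonneg hcont hderiv hnonneg hlim, ?_⟩
  rw [integral_Ioi_of_hasDerivAt_of_nonneg hcont hderiv hnonneg hlim, Real.zero_rpow hα.ne']
  ring

theorem dirichlet_energy_Ynull (α : ℝ) (hα : 0 < α) :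
    DifferentiableOn ℝ (Ynull α) {y : Plane | y ≠ 0} ∧
      Integrable (fun y : Plane => ‖gradient (Ynull α) y‖ ^ 2) volume ∧
      ∫ y : Plane, ‖gradient (Ynull α) y‖ ^ 2 = 4 * π * α / 3 := by
  have hae : (fun y : Plane => ‖gradient (Ynull α) y‖ ^ 2) =ᵐ[volume]
      fun y => (2 * (α * ‖y‖ ^ (α - 1)) / (1 + ‖y‖ ^ α) ^ 2) ^ 2 := by
    filter_upwards [Measure.ae_ne volume (0 : Plane)] with y hy
    exact norm_gradient_Ynull_sq α hy
  obtain ⟨hint, hval⟩ := integral_energy_radial hα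
  refine ⟨fun y hy => (hasFDerivAt_Ynull α hy).differentiableAt.differentiableWithinAt, ?_, ?_⟩
  · rw [integrable_congr hae, integrable_fun_norm_addHaar volume
      (f := fun r : ℝ => (2 * (α * r ^ (α - 1)) / (1 + r ^ α) ^ 2) ^ 2)]
    simpa using hint
  · have hball : volume.real (Metric.ball (0 : Plane) 1) = π := by
      simp [Measure.real, EuclideanSpace.volume_ball_fin_two, Real.pi_nonneg]
    rw [integral_congr_ae hae, integral_fun_norm_addHaar volume
      (fun r : ℝ => (2 * (α * r ^ (α - 1)) / (1 + r ^ α) ^ 2) ^ 2), hball]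
    simp only [finrank_euclideanSpace, Fintype.card_fin, Nat.add_one_sub_one, pow_one,
      smul_eq_mul, nsmul_eq_mul, hval]
    push_cast
    ring
end
end
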